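/- arXiv:2203.14687 — 2 statements merged into one kernel-verified Lean document; each statement's English description precedes it below -/
import Mathlib

section
/- Let q = 2^h and let f(X,Y) = Σ_{i,j} a_{i,j} X^i Y^j ∈ F_q[X,Y] have total degree d ≥ 1 and a_{0,0} = 0. If there exists a pair (i,j) ∉ {(1,0),(0,1)} with a_{i,j} ≠ 0, then the hypersurface S_f contains an absolutely irreducible component defined over F_q; that is, there is a nonconstant polynomial g ∈ F_q[X_0,X_1,X_2,X_3,X_4] dividing F that remains irreducible over the algebraic closure of F_q. -/
open MvPolynomial

/-- The coefficient `a_{i,j}` of the monomial `X^i Y^j` in `f ∈ F_q[X,Y]`. -/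
noncomputable def coeffXY {K : Type*} [Field K] (f : MvPolynomial (Fin 2) K) (i j : ℕ) : K :=
  f.coeff (Finsupp.single (0 : Fin 2) i + Finsupp.single (1 : Fin 2) j)

/-- The homogeneous polynomial
`F = (X₂ − X₄)² X₀^{d−1} + (X₁ − X₃)·Σ_{i,j} a_{i,j}(X₁^i X₂^j − X₃^i X₄^j) X₀^{d−i−j}`
defining the hypersurface `S_f ⊂ PG(4,q)`. -/
noncomputable def Fpoly {K : Type*} [Field K] (f : MvPolynomial (Fin 2) K) (d : ℕ) :
    MvPolynomial (Fin 5) K :=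
  (X 2 - X 4) ^ 2 * (X 0) ^ (d - 1)
    + (X 1 - X 3) *
      ∑ m ∈ f.support,
        C (f.coeff m) *
          ((X 1) ^ (m 0) * (X 2) ^ (m 1) - (X 3) ^ (m 0) * (X 4) ^ (m 1))
          * (X 0) ^ (d - m 0 - m 1)

/-- `S_f` contains an absolutely irreducible component defined over the base field: there is a
nonconstant polynomial `g` over the base field dividing `F` that remains irreducible over the
algebraic closure. -/
def HasAbsIrrComponent {K : Type*} [Field K] (F : MvPolynomial (Fin 5) K) : Prop :=
  ∃ g : MvPolynomial (Fin 5) K, g ∣ F ∧ 0 < g.totalDegree ∧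
    Irreducible (MvPolynomial.map (algebraMap K (AlgebraicClosure K)) g)


section Descent

variable {K : Type*} [Field K]

theorem map_galois_map_algebraMap {ι : Type*} (σ : Gal(AlgebraicClosure K/K))
    (p : MvPolynomial ι K) :
    map (σ : AlgebraicClosure K →+* AlgebraicClosure K)
      (map (algebraMap K (AlgebraicClosure K)) p) = map (algebraMap K (AlgebraicClosure K)) p := by
  ext m
  simp only [coeff_map]
  exact σ.commutes _

variable [Finite K]

/-- A polynomial over the algebraic closure fixed by all Galois automorphisms is defined over the
base field. -/
theorem exists_map_eq_of_galois_fixed {ι : Type*} (p : MvPolynomial ι (AlgebraicClosure K))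
    (hp : ∀ σ : Gal(AlgebraicClosure K/K),
      map (σ : AlgebraicClosure K →+* AlgebraicClosure K) p = p) :
    ∃ p₀ : MvPolynomial ι K, map (algebraMap K (AlgebraicClosure K)) p₀ = p := by
  have hmem : p ∈ Set.range (map (σ := ι) (algebraMap K (AlgebraicClosure K))) := by
    rw [mem_range_map_iff_coeffs_subset]
    intro x hx
    obtain ⟨m, -, rfl⟩ := mem_coeffs_iff.mp hx
    rw [InfiniteGalois.mem_range_algebraMap_iff_fixed]
    intro σ
    have h := congrArg (coeff m) (hp σ)
    rwa [coeff_map] at h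
  exact hmem

/-- If every Galois conjugate of `g` is associated to `g`, then a scalar multiple of `g` is defined
over the base field. -/
theorem exists_associated_map_of_galois_associated {ι : Type*}
    (g : MvPolynomial ι (AlgebraicClosure K)) (hg0 : g ≠ 0)
    (hg : ∀ σ : Gal(AlgebraicClosure K/K),
      Associated (map (σ : AlgebraicClosure K →+* AlgebraicClosure K) g) g) :
    ∃ g₀ : MvPolynomial ι K, Associated (map (algebraMap K (AlgebraicClosure K)) g₀) g := by
  obtain ⟨m, hm⟩ := ne_zero_iff.mp hg0
  have hunit : IsUnit (C (coeff m g)⁻¹ : MvPolynomial ι (AlgebraicClosure K)) :=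
    (IsUnit.mk0 _ (inv_ne_zero hm)).map C
  obtain ⟨g₀, hg₀⟩ := exists_map_eq_of_galois_fixed (C (coeff m g)⁻¹ * g) (by
    intro σ
    obtain ⟨u, hu⟩ := (hg σ).symm
    obtain ⟨c, -, hc⟩ := MvPolynomial.isUnit_iff_eq_C_of_isReduced.mp u.isUnit
    rw [hc] at hu
    have hcm := congrArg (coeff m) hu
    rw [mul_comm, coeff_C_mul, coeff_map, mul_comm] at hcm
    have hc0 : c ≠ 0 := by
      rintro rfl
      rw [mul_zero] at hcm
      exact hm ((map_eq_zero _).mp hcm.symm)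
    rw [map_mul, map_C, ← hu, map_inv₀, ← hcm, mul_comm g, ← mul_assoc, ← C_mul]
    congr 2
    field_simp)
  refine ⟨g₀, ?_⟩
  rw [hg₀]
  exact associated_unit_mul_left _ _ hunit

/-- Divisibility of multivariate polynomials descends from the algebraic closure. -/
theorem dvd_of_map_dvd_map {ι : Type*} (g F : MvPolynomial ι K) (hF : F ≠ 0)
    (h : map (algebraMap K (AlgebraicClosure K)) g ∣ map (algebraMap K (AlgebraicClosure K)) F) :
    g ∣ F := by
  have hinj := map_injective (σ := ι) (algebraMap K (AlgebraicClosure K))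
    (algebraMap K (AlgebraicClosure K)).injective
  obtain ⟨r, hr⟩ := h
  have hg0 : map (algebraMap K (AlgebraicClosure K)) g ≠ 0 := by
    intro h0
    rw [h0, zero_mul] at hr
    exact hF (hinj (by rw [hr, map_zero]))
  obtain ⟨r₀, rfl⟩ := exists_map_eq_of_galois_fixed r (by
    intro σ
    have h1 := congrArg (map (σ : AlgebraicClosure K →+* AlgebraicClosure K)) hr
    rw [map_mul, map_galois_map_algebraMap, map_galois_map_algebraMap, hr] at h1
    exact (mul_left_cancel₀ hg0 h1).symm)
  exact ⟨r₀, hinj (by rw [hr, map_mul])⟩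

/-- A Galois-stable property singling out a unique irreducible factor of `F` over the algebraic
closure yields an absolutely irreducible factor over the base field. -/
theorem hasAbsIrrComponent_of_unique_factor (F : MvPolynomial (Fin 5) K) (hF : F ≠ 0)
    (P : MvPolynomial (Fin 5) (AlgebraicClosure K) → Prop)
    (hPF : P (map (algebraMap K (AlgebraicClosure K)) F))
    (hunit : ∀ g, IsUnit g → ¬ P g)
    (hmul : ∀ g h, g * h ≠ 0 → P (g * h) → P g ∨ P h)
    (htwo : ∀ g h, g * h ∣ map (algebraMap K (AlgebraicClosure K)) F → P g → ¬ P h)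
    (hgal : ∀ (σ : Gal(AlgebraicClosure K/K)) (g), P g →
      P (map (σ : AlgebraicClosure K →+* AlgebraicClosure K) g)) :
    HasAbsIrrComponent F := by
  have hF0 : map (algebraMap K (AlgebraicClosure K)) F ≠ 0 := by
    rwa [Ne, map_eq_zero_iff _ (map_injective _ (algebraMap K (AlgebraicClosure K)).injective)]
  have key : ∀ a : MvPolynomial (Fin 5) (AlgebraicClosure K), a ≠ 0 → P a →
      ∃ g, Irreducible g ∧ g ∣ a ∧ P g := by
    intro a
    induction a using WfDvdMonoid.induction_on_irreducible with
    | zero => exact fun h => absurd rfl h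
    | unit u hu => exact fun _ h => absurd h (hunit u hu)
    | mul a i ha hi ih =>
      intro h0 hP
      rcases hmul i a h0 hP with h | h
      · exact ⟨i, hi, dvd_mul_right _ _, h⟩
      · obtain ⟨g, hg, hga, hPg⟩ := ih ha h
        exact ⟨g, hg, hga.mul_left i, hPg⟩
  obtain ⟨g, hg, hgF, hPg⟩ := key _ hF0 hPF
  have hassoc : ∀ σ : Gal(AlgebraicClosure K/K),
      Associated (map (σ : AlgebraicClosure K →+* AlgebraicClosure K) g) g := by
    intro σ
    have hσirr : Irreducible (map (σ : AlgebraicClosure K →+* AlgebraicClosure K) g) :=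
      (MulEquiv.irreducible_iff (mapEquiv (Fin 5) (σ : AlgebraicClosure K ≃+* AlgebraicClosure K))
        (x := g)).mpr hg
    by_contra hna
    have hσF : map (σ : AlgebraicClosure K →+* AlgebraicClosure K) g ∣
        map (algebraMap K (AlgebraicClosure K)) F := by
      have h1 := map_dvd (map (σ : AlgebraicClosure K →+* AlgebraicClosure K)) hgF
      rwa [map_galois_map_algebraMap] at h1
    obtain ⟨r, hr⟩ := hgF
    have hdr : map (σ : AlgebraicClosure K →+* AlgebraicClosure K) g ∣ r := by
      rw [hr] at hσF
      rcases hσirr.prime.dvd_or_dvd hσF with h | h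
      · exact absurd (hσirr.associated_of_dvd hg h) hna
      · exact h
    exact htwo g _ (hr ▸ mul_dvd_mul_left g hdr) hPg (hgal σ g hPg)
  obtain ⟨g₀, hg₀⟩ := exists_associated_map_of_galois_associated g hg.ne_zero hassoc
  have hirr : Irreducible (map (algebraMap K (AlgebraicClosure K)) g₀) := hg₀.irreducible_iff.mpr hg
  refine ⟨g₀, dvd_of_map_dvd_map g₀ F hF (hg₀.dvd.trans hgF), ?_, hirr⟩
  rw [Nat.pos_iff_ne_zero]
  intro hdeg
  rw [totalDegree_eq_zero_iff_eq_C] at hdeg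
  rw [hdeg, map_C] at hirr
  refine hirr.not_isUnit ((IsUnit.mk0 _ ?_).map C)
  intro h0
  rw [h0, C_0] at hirr
  exact hirr.ne_zero rfl

end Descent

section Slice

open scoped Polynomial

variable {L : Type*} [Field L]

/-- A polynomial in `X, Y` seen as a univariate polynomial in `Y` over `L[X]`. -/
noncomputable def toIterated (f : MvPolynomial (Fin 2) L) : L[X][X] :=
  f.eval₂ (Polynomial.C.comp Polynomial.C) ![Polynomial.C Polynomial.X, Polynomial.X]

theorem coeff_coeff_toIterated (f : MvPolynomial (Fin 2) L) (i j : ℕ) :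
    ((toIterated f).coeff j).coeff i = coeffXY f i j := by
  induction f using MvPolynomial.induction_on' with
  | monomial m a =>
    have hm : m = Finsupp.single 0 i + Finsupp.single 1 j ↔ j = m 1 ∧ i = m 0 := by
      rw [Finsupp.ext_iff, Fin.forall_fin_two]
      simp
      tauto
    rw [coeffXY, coeff_monomial, toIterated, eval₂_monomial, Finsupp.prod_fintype _ _ (by simp),
      Fin.prod_univ_two]
    simp only [hm, RingHom.comp_apply, Matrix.cons_val_zero, Matrix.cons_val_one,
      ← Polynomial.C_pow, ← mul_assoc, ← Polynomial.C_mul, Polynomial.coeff_C_mul_X_pow]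
    by_cases h1 : j = m 1
    · simp [h1, Polynomial.coeff_X_pow]
    · simp [h1]
  | add p q hp hq =>
    rw [coeffXY] at hp hq
    rw [coeffXY, coeff_add, ← hp, ← hq, toIterated, eval₂_add]
    simp [toIterated]

theorem eval₂_Fpoly {A : Type*} [CommRing A] (φ : L →+* A) (x y z w : A)
    (f : MvPolynomial (Fin 2) L) (d : ℕ) :
    eval₂ φ ![1, x, y, z, w] (Fpoly f d) =
      (y - w) ^ 2 + (x - z) * (f.eval₂ φ ![x, y] - f.eval₂ φ ![z, w]) := by
  rw [eval₂_eq' φ ![x, y], eval₂_eq' φ ![z, w], ← Finset.sum_sub_distrib, ← coe_eval₂Hom]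
  simp [Fpoly, Fin.prod_univ_two, mul_sub]

theorem map_Fpoly {K : Type*} [Field K] (φ : K →+* L) (f : MvPolynomial (Fin 2) K) (d : ℕ) :
    map φ (Fpoly f d) = Fpoly (map φ f) d := by
  simp [Fpoly, support_map_of_injective _ φ.injective, coeff_map]

variable {A : Type*} [CommRing A]

/-- The specialization `X₀ = 1`, `X₁ = ι X`, `X₃ = κ X`, `X₄ = c`, as a polynomial in `X₂`. -/
noncomputable def slice (ι κ : L[X] →+* A) (c : A[X]) : MvPolynomial (Fin 5) L →+* A[X] :=
  eval₂Hom (Polynomial.C.comp (ι.comp Polynomial.C))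
    ![1, Polynomial.C (ι Polynomial.X), Polynomial.X, Polynomial.C (κ Polynomial.X), c]

theorem map_toIterated (ι : L[X] →+* A) (f : MvPolynomial (Fin 2) L) :
    (toIterated f).map ι = f.eval₂ (Polynomial.C.comp (ι.comp Polynomial.C))
      ![Polynomial.C (ι Polynomial.X), Polynomial.X] := by
  rw [toIterated, ← Polynomial.coe_mapRingHom, MvPolynomial.hom_eval₂]
  congr 1
  · ext
    simp
  · funext i
    fin_cases i <;> simp

theorem slice_zero_Fpoly (ι κ : L[X] →+* A) (hικ : ι.comp Polynomial.C = κ.comp Polynomial.C)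
    (f : MvPolynomial (Fin 2) L) (d : ℕ) :
    slice ι κ 0 (Fpoly f d) = Polynomial.X ^ 2 +
      Polynomial.C (ι Polynomial.X - κ Polynomial.X) *
        ((toIterated f).map ι - Polynomial.C (κ ((toIterated f).coeff 0))) := by
  have h : Polynomial.C (κ ((toIterated f).coeff 0)) =
      f.eval₂ (Polynomial.C.comp (κ.comp Polynomial.C))
        ![Polynomial.C (κ Polynomial.X), 0] := by
    rw [Polynomial.coeff_zero_eq_eval_zero, toIterated, ← Polynomial.coe_evalRingHom,
      MvPolynomial.hom_eval₂, MvPolynomial.hom_eval₂, MvPolynomial.hom_eval₂]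
    congr 1
    · ext
      simp
    · funext i
      fin_cases i <;> simp
  rw [slice, coe_eval₂Hom, eval₂_Fpoly, map_toIterated, h, sub_zero, Polynomial.C_sub, hικ]

theorem slice_X_Fpoly (ι κ : L[X] →+* A) (hικ : ι.comp Polynomial.C = κ.comp Polynomial.C)
    (f : MvPolynomial (Fin 2) L) (d : ℕ) :
    slice ι κ Polynomial.X (Fpoly f d) =
      Polynomial.C (ι Polynomial.X - κ Polynomial.X) *
        ((toIterated f).map ι - (toIterated f).map κ) := by
  rw [slice, coe_eval₂Hom, eval₂_Fpoly, map_toIterated, map_toIterated, sub_self,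
    zero_pow two_ne_zero, zero_add, Polynomial.C_sub, hικ]

theorem slice_map (ι κ : L[X] →+* A) (σ : L →+* L) (τ : A →+* A)
    (hι : τ.comp ι = ι.comp (Polynomial.mapRingHom σ))
    (hκ : τ.comp κ = κ.comp (Polynomial.mapRingHom σ))
    (c : A[X]) (hc : c.map τ = c)
    (g : MvPolynomial (Fin 5) L) : slice ι κ c (map σ g) = (slice ι κ c g).map τ := by
  have hι' : ∀ p, τ (ι p) = ι (p.map σ) := RingHom.congr_fun hι
  have hκ' : ∀ p, τ (κ p) = κ (p.map σ) := RingHom.congr_fun hκ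
  suffices h : (slice ι κ c).comp (map σ) = (Polynomial.mapRingHom τ).comp (slice ι κ c) from
    RingHom.congr_fun h g
  apply MvPolynomial.ringHom_ext
  · intro a
    simp [slice, hι']
  · intro i
    fin_cases i <;> simp [slice, hc, hι', hκ']

end Slice

section Criterion

open scoped Polynomial

variable {K : Type*} [Field K] [Finite K]

/-- An additive Galois-invariant degree on `L[x][z][y]`, positive on the specialization of `F` and
positive on at most one factor of it, yields an absolutely irreducible factor of `F`. -/
theorem hasAbsIrrComponent_of_degree (F : MvPolynomial (Fin 5) K)
    (δ : (AlgebraicClosure K)[X][X][X] → ℕ) (hδ0 : δ 0 = 0)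
    (hδmul : ∀ a b, a ≠ 0 → b ≠ 0 → δ (a * b) = δ a + δ b)
    (hδmap : ∀ (σ : AlgebraicClosure K →+* AlgebraicClosure K) (a),
      δ (a.map (Polynomial.mapRingHom (Polynomial.mapRingHom σ))) = δ a)
    (c : (AlgebraicClosure K)[X][X][X])
    (hc : ∀ σ : AlgebraicClosure K →+* AlgebraicClosure K,
      c.map (Polynomial.mapRingHom (Polynomial.mapRingHom σ)) = c)
    (hF : 0 < δ (slice Polynomial.C (Polynomial.mapRingHom Polynomial.C) c
      (map (algebraMap K (AlgebraicClosure K)) F)))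
    (htwo : ∀ a b, a * b ∣ slice Polynomial.C (Polynomial.mapRingHom Polynomial.C) c
      (map (algebraMap K (AlgebraicClosure K)) F) → 0 < δ a → ¬ 0 < δ b) :
    HasAbsIrrComponent F := by
  have hδ1 : δ 1 = 0 := by
    have h := hδmul 1 1 one_ne_zero one_ne_zero
    rw [mul_one] at h
    omega
  refine hasAbsIrrComponent_of_unique_factor F ?_
    (fun g => 0 < δ (slice Polynomial.C (Polynomial.mapRingHom Polynomial.C) c g)) hF ?_ ?_ ?_ ?_
  · rintro rfl
    rw [map_zero, map_zero, hδ0] at hF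
    exact lt_irrefl _ hF
  · intro g hg
    obtain ⟨b, hb⟩ := (hg.map
      (slice Polynomial.C (Polynomial.mapRingHom Polynomial.C) c)).exists_right_inv
    have h := hδmul _ _ (left_ne_zero_of_mul_eq_one hb) (right_ne_zero_of_mul_eq_one hb)
    rw [hb, hδ1] at h
    omega
  · intro g h _ hpos
    rw [map_mul] at hpos
    by_cases hg : slice Polynomial.C (Polynomial.mapRingHom Polynomial.C) c g = 0
    · rw [hg, zero_mul, hδ0] at hpos
      exact absurd hpos (lt_irrefl _)
    by_cases hh : slice Polynomial.C (Polynomial.mapRingHom Polynomial.C) c h = 0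
    · rw [hh, mul_zero, hδ0] at hpos
      exact absurd hpos (lt_irrefl _)
    rw [hδmul _ _ hg hh] at hpos
    omega
  · intro g h hgh
    refine htwo _ _ ?_
    rw [← map_mul]
    exact map_dvd _ hgh
  · intro σ g hg
    rw [slice_map _ _ _ (Polynomial.mapRingHom (Polynomial.mapRingHom
      (σ : AlgebraicClosure K →+* AlgebraicClosure K))) _ _ _ (hc _), hδmap]
    · exact hg
    · ext <;> simp
    · ext <;> simp

/-- The case of total degree one in `hasAbsIrrComponent_of_degree`. -/
theorem hasAbsIrrComponent_of_degree_eq_one (F : MvPolynomial (Fin 5) K)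
    (δ : (AlgebraicClosure K)[X][X][X] → ℕ) (hδ0 : δ 0 = 0)
    (hδmul : ∀ a b, a ≠ 0 → b ≠ 0 → δ (a * b) = δ a + δ b)
    (hδmap : ∀ (σ : AlgebraicClosure K →+* AlgebraicClosure K) (a),
      δ (a.map (Polynomial.mapRingHom (Polynomial.mapRingHom σ))) = δ a)
    (c : (AlgebraicClosure K)[X][X][X])
    (hc : ∀ σ : AlgebraicClosure K →+* AlgebraicClosure K,
      c.map (Polynomial.mapRingHom (Polynomial.mapRingHom σ)) = c)
    (hF : δ (slice Polynomial.C (Polynomial.mapRingHom Polynomial.C) c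
      (map (algebraMap K (AlgebraicClosure K)) F)) = 1) :
    HasAbsIrrComponent F := by
  refine hasAbsIrrComponent_of_degree F δ hδ0 hδmul hδmap c hc (by omega) ?_
  rintro a b ⟨r, hr⟩ ha hb
  rw [hr] at hF
  have h0 : a * b * r ≠ 0 := by
    intro h0
    rw [h0, hδ0] at hF
    exact zero_ne_one hF
  have hab := left_ne_zero_of_mul h0
  rw [hδmul _ _ hab (right_ne_zero_of_mul h0),
    hδmul _ _ (left_ne_zero_of_mul hab) (right_ne_zero_of_mul hab)] at hF
  omega

end Criterion

section DegreeComputations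

open scoped Polynomial

theorem leadingCoeff_X_sq_add_C_mul {A : Type*} [CommRing A] (u k : A) (P : A[X])
    (hP : 2 ≤ P.natDegree)
    (h : (if P.natDegree = 2 then 1 else 0) + u * P.leadingCoeff ≠ 0) :
    (Polynomial.X ^ 2 + Polynomial.C u * (P - Polynomial.C k)).leadingCoeff =
      (if P.natDegree = 2 then 1 else 0) + u * P.leadingCoeff := by
  have hcoeff : (Polynomial.X ^ 2 + Polynomial.C u * (P - Polynomial.C k)).coeff P.natDegree =
      (if P.natDegree = 2 then 1 else 0) + u * P.leadingCoeff := by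
    rw [Polynomial.coeff_add, Polynomial.coeff_X_pow, Polynomial.coeff_C_mul, Polynomial.coeff_sub,
      Polynomial.coeff_C_of_ne_zero (by omega), sub_zero, Polynomial.leadingCoeff]
  have hle : (Polynomial.X ^ 2 + Polynomial.C u * (P - Polynomial.C k)).natDegree ≤
      P.natDegree := by
    refine Polynomial.natDegree_add_le_of_degree_le
      ((Polynomial.natDegree_X_pow_le 2).trans hP) ?_
    refine (Polynomial.natDegree_C_mul_le _ _).trans ?_
    rw [Polynomial.natDegree_sub_C]
  rw [Polynomial.leadingCoeff, ← hcoeff]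
  congr 1
  exact le_antisymm hle (Polynomial.le_natDegree_of_ne_zero (hcoeff ▸ h))

theorem natDegree_ite_add_C_sub_X_mul_C {B : Type*} [CommRing B] [Nontrivial B] (x q : B)
    (hq : q ≠ 0) (P : Prop) [Decidable P] :
    ((if P then 1 else 0) + (Polynomial.C x - Polynomial.X) * Polynomial.C q : B[X]).natDegree =
      1 := by
  have h : ((if P then 1 else 0) + (Polynomial.C x - Polynomial.X) * Polynomial.C q : B[X]) =
      Polynomial.C (-q) * Polynomial.X + Polynomial.C ((if P then 1 else 0) + x * q) := by
    split_ifs <;> simp <;> ring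
  rw [h, Polynomial.natDegree_linear (neg_ne_zero.mpr hq)]

theorem C_sub_map_C_ne_zero {L : Type*} [Field L] (p : L[X]) (hp : 0 < p.natDegree) :
    (Polynomial.C p - p.map Polynomial.C : L[X][X]) ≠ 0 := by
  intro h
  have h1 := congrArg (fun r : L[X][X] => r.coeff p.natDegree) h
  simp only [Polynomial.coeff_sub, Polynomial.coeff_C_of_ne_zero hp.ne', Polynomial.coeff_map,
    Polynomial.coeff_zero, zero_sub, neg_eq_zero, Polynomial.C_eq_zero,
    Polynomial.coeff_natDegree, Polynomial.leadingCoeff_eq_zero] at h1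
  simp [h1] at hp

theorem C_X_sub_X_ne_zero {L : Type*} [Field L] :
    (Polynomial.C Polynomial.X - Polynomial.X : L[X][X]) ≠ 0 := by
  rw [← neg_ne_zero, neg_sub]
  exact Polynomial.X_sub_C_ne_zero _

/-- In characteristic two, the quadratic `T² + b(x + z)T + (x + z)(p(x) + p(z))` has no root in
`L[x][z]` when `p` has degree at least two. -/
theorem not_root_quadratic {L : Type*} [Field L] [CharP L 2] (p : L[X]) (hp : 2 ≤ p.natDegree)
    (b : L) (r : L[X][X]) :
    r ^ 2 ≠ (Polynomial.X + Polynomial.C Polynomial.X) *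
      (p.map Polynomial.C + Polynomial.C p + Polynomial.C (Polynomial.C b) * r) := by
  intro h
  have hp0 : p ≠ 0 := by
    rintro rfl
    simp at hp
  have hnd : (p.map Polynomial.C : L[X][X]).natDegree = p.natDegree :=
    Polynomial.natDegree_map_eq_of_injective Polynomial.C_injective p
  have hndC : (p.map Polynomial.C + Polynomial.C p : L[X][X]).natDegree = p.natDegree := by
    rw [Polynomial.natDegree_add_C, hnd]
  have hbr : (Polynomial.C (Polynomial.C b) * r).natDegree ≤ r.natDegree :=
    Polynomial.natDegree_C_mul_le _ _
  have hlt : r.natDegree < p.natDegree := by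
    by_contra hge
    have h1 := congrArg Polynomial.natDegree h
    rw [Polynomial.natDegree_pow] at h1
    have h2 := Polynomial.natDegree_mul_le (p := (Polynomial.X + Polynomial.C Polynomial.X : L[X][X]))
      (q := p.map Polynomial.C + Polynomial.C p + Polynomial.C (Polynomial.C b) * r)
    rw [Polynomial.natDegree_X_add_C] at h2
    have h3 := Polynomial.natDegree_add_le (p.map Polynomial.C + Polynomial.C p)
      (Polynomial.C (Polynomial.C b) * r)
    rw [hndC] at h3
    omega
  have hbracket : (p.map Polynomial.C + Polynomial.C p +
      Polynomial.C (Polynomial.C b) * r).natDegree = p.natDegree := by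
    rw [Polynomial.natDegree_add_eq_left_of_natDegree_lt (by omega), hndC]
  have hlead : (p.map Polynomial.C + Polynomial.C p +
      Polynomial.C (Polynomial.C b) * r).leadingCoeff = Polynomial.C p.leadingCoeff := by
    rw [Polynomial.leadingCoeff, hbracket, Polynomial.coeff_add, Polynomial.coeff_add,
      Polynomial.coeff_map, Polynomial.coeff_C_of_ne_zero (by omega),
      Polynomial.coeff_eq_zero_of_natDegree_lt (lt_of_le_of_lt hbr hlt), add_zero, add_zero,
      Polynomial.coeff_natDegree]
  have hdeg : 2 * r.natDegree = p.natDegree + 1 := by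
    have h1 := congrArg Polynomial.natDegree h
    rw [Polynomial.natDegree_pow, Polynomial.natDegree_mul (Polynomial.X_add_C_ne_zero _)
      (by rw [← Polynomial.leadingCoeff_ne_zero, hlead]; simpa using hp0),
      Polynomial.natDegree_X_add_C, hbracket] at h1
    omega
  have hrlead : r.leadingCoeff.natDegree = 0 := by
    have h1 := congrArg Polynomial.leadingCoeff h
    rw [Polynomial.leadingCoeff_pow, Polynomial.leadingCoeff_mul, Polynomial.leadingCoeff_X_add_C,
      one_mul, hlead] at h1
    have h2 := congrArg Polynomial.natDegree h1
    rw [Polynomial.natDegree_pow, Polynomial.natDegree_C] at h2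
    omega
  obtain ⟨k, hk⟩ : ∃ k, p.natDegree = 2 * k + 3 := ⟨r.natDegree - 2, by omega⟩
  have hrcoeff : (r.coeff (2 * k + 2)).coeff 1 = 0 := by
    apply Polynomial.coeff_eq_zero_of_natDegree_lt
    rcases lt_or_eq_of_le (show r.natDegree ≤ 2 * k + 2 by omega) with h1 | h1
    · rw [Polynomial.coeff_eq_zero_of_natDegree_lt h1]
      simp
    · rw [← h1, Polynomial.coeff_natDegree, hrlead]
      exact one_pos
  have hr0 : r.coeff (2 * k + 3) = 0 :=
    Polynomial.coeff_eq_zero_of_natDegree_lt (by omega)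
  have hder := congrArg Polynomial.derivative h
  have h2 : (2 : L[X]) = 0 := CharTwo.two_eq_zero
  have h2L : (2 : L) = 0 := CharTwo.two_eq_zero
  rw [Polynomial.derivative_sq, Polynomial.derivative_mul] at hder
  have hc := congrArg (fun s : L[X][X] => (s.coeff (2 * k + 2)).coeff 1) hder
  simp only [Polynomial.derivative_add, Polynomial.derivative_X, Polynomial.derivative_C,
    Polynomial.derivative_map, Polynomial.derivative_C_mul, add_zero, one_mul, add_mul,
    Polynomial.coeff_add, Polynomial.coeff_C_mul, Polynomial.coeff_X_mul, Polynomial.coeff_map,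
    Polynomial.coeff_derivative, hr0, Polynomial.coeff_C_succ] at hc
  have heven : ((2 * k + 1 : ℕ) : L[X]) + 1 = 0 := by
    push_cast
    linear_combination ((k : L[X]) + 1) * h2
  have hodd : ((2 * k + 2 : ℕ) : L) + 1 = 1 := by
    push_cast
    linear_combination ((k : L) + 1) * h2L
  rw [h2, hrcoeff, heven, hodd] at hc
  simp only [Polynomial.C_0, zero_mul, mul_zero, Polynomial.coeff_zero, mul_one,
    Polynomial.coeff_C_zero, add_zero, zero_add] at hc
  rw [show 2 * k + 2 + 1 = p.natDegree by omega, Polynomial.coeff_natDegree] at hc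
  exact hp0 (Polynomial.leadingCoeff_eq_zero.mp hc.symm)

end DegreeComputations

section Cases

open scoped Polynomial

variable {K : Type*} [Field K] [Finite K]

theorem C_comp_C_eq_mapRingHom_comp_C {L : Type*} [Field L] :
    (Polynomial.C : L[X] →+* L[X][X]).comp Polynomial.C =
      (Polynomial.mapRingHom Polynomial.C).comp Polynomial.C := by
  ext
  simp

theorem hasAbsIrrComponent_of_two_le_natDegree (f : MvPolynomial (Fin 2) K) (d : ℕ)
    (hn : 2 ≤ (toIterated (map (algebraMap K (AlgebraicClosure K)) f)).natDegree) :
    HasAbsIrrComponent (Fpoly f d) := by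
  refine hasAbsIrrComponent_of_degree_eq_one _ (fun a => a.leadingCoeff.natDegree) (by simp)
    ?_ ?_ 0 (by simp) ?_
  · intro a b ha hb
    simp only [Polynomial.leadingCoeff_mul]
    exact Polynomial.natDegree_mul (Polynomial.leadingCoeff_ne_zero.mpr ha)
      (Polynomial.leadingCoeff_ne_zero.mpr hb)
  · intro σ a
    have hinj : Function.Injective (Polynomial.mapRingHom (Polynomial.mapRingHom σ)) :=
      Polynomial.map_injective _ (Polynomial.map_injective _ σ.injective)
    simp only [Polynomial.leadingCoeff_map_of_injective hinj]
    exact Polynomial.natDegree_map_eq_of_injective (Polynomial.map_injective _ σ.injective) _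
  · rw [map_Fpoly, slice_zero_Fpoly _ _ C_comp_C_eq_mapRingHom_comp_C]
    set p := toIterated (map (algebraMap K (AlgebraicClosure K)) f)
    have hp0 : p.leadingCoeff ≠ 0 := by
      rw [Polynomial.leadingCoeff_ne_zero]
      rintro h0
      simp [h0] at hn
    have hnd : (p.map Polynomial.C).natDegree = p.natDegree :=
      Polynomial.natDegree_map_eq_of_injective Polynomial.C_injective p
    have hlc : (p.map Polynomial.C).leadingCoeff = Polynomial.C p.leadingCoeff :=
      Polynomial.leadingCoeff_map_of_injective Polynomial.C_injective p
    have hone := natDegree_ite_add_C_sub_X_mul_C Polynomial.X p.leadingCoeff hp0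
      ((p.map Polynomial.C).natDegree = 2)
    rw [← hlc] at hone
    rw [Polynomial.coe_mapRingHom, Polynomial.map_X, leadingCoeff_X_sq_add_C_mul, hone]
    · rw [hnd]
      exact hn
    · intro h0
      rw [h0] at hone
      simp at hone

theorem hasAbsIrrComponent_of_natDegree_coeff_one (f : MvPolynomial (Fin 2) K) (d : ℕ)
    (hn : (toIterated (map (algebraMap K (AlgebraicClosure K)) f)).natDegree ≤ 1)
    (h1 : 0 < ((toIterated (map (algebraMap K (AlgebraicClosure K)) f)).coeff 1).natDegree) :
    HasAbsIrrComponent (Fpoly f d) := by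
  refine hasAbsIrrComponent_of_degree_eq_one _ Polynomial.natDegree (by simp)
    (fun a b ha hb => Polynomial.natDegree_mul ha hb) ?_ Polynomial.X (by simp) ?_
  · intro σ a
    exact Polynomial.natDegree_map_eq_of_injective
      (Polynomial.map_injective _ (Polynomial.map_injective _ σ.injective)) a
  · rw [map_Fpoly, slice_X_Fpoly _ _ C_comp_C_eq_mapRingHom_comp_C]
    set p := toIterated (map (algebraMap K (AlgebraicClosure K)) f)
    rw [Polynomial.natDegree_C_mul (by
      rw [Polynomial.coe_mapRingHom, Polynomial.map_X]
      exact C_X_sub_X_ne_zero)]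
    refine le_antisymm ?_ (Polynomial.le_natDegree_of_ne_zero ?_)
    · exact Polynomial.natDegree_sub_le_of_le (Polynomial.natDegree_map_le.trans hn)
        (Polynomial.natDegree_map_le.trans hn)
    · rw [Polynomial.coeff_sub, Polynomial.coeff_map, Polynomial.coeff_map,
        Polynomial.coe_mapRingHom]
      exact C_sub_map_C_ne_zero _ h1

theorem hasAbsIrrComponent_of_coeff_one_eq_C [CharP K 2] (f : MvPolynomial (Fin 2) K) (d : ℕ)
    (b : AlgebraicClosure K)
    (hn : (toIterated (map (algebraMap K (AlgebraicClosure K)) f)).natDegree ≤ 1)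
    (h1 : (toIterated (map (algebraMap K (AlgebraicClosure K)) f)).coeff 1 = Polynomial.C b)
    (h0 : 2 ≤ ((toIterated (map (algebraMap K (AlgebraicClosure K)) f)).coeff 0).natDegree) :
    HasAbsIrrComponent (Fpoly f d) := by
  have : CharP (AlgebraicClosure K) 2 := charP_of_injective_algebraMap' K 2
  set p := toIterated (map (algebraMap K (AlgebraicClosure K)) f) with hp
  set e : (AlgebraicClosure K)[X][X] := Polynomial.X + Polynomial.C Polynomial.X with he
  have hslice : slice Polynomial.C (Polynomial.mapRingHom Polynomial.C) 0
      (map (algebraMap K (AlgebraicClosure K)) (Fpoly f d)) =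
      Polynomial.C 1 * Polynomial.X ^ 2 +
        Polynomial.C (e * Polynomial.C (Polynomial.C b)) * Polynomial.X +
        Polynomial.C (e * ((p.coeff 0).map Polynomial.C + Polynomial.C (p.coeff 0))) := by
    have hpe : p = Polynomial.C (Polynomial.C b) * Polynomial.X + Polynomial.C (p.coeff 0) := by
      rw [← h1]
      exact Polynomial.eq_X_add_C_of_natDegree_le_one hn
    have hmap : p.map (Polynomial.C : _ →+* (AlgebraicClosure K)[X][X]) =
        Polynomial.C (Polynomial.C (Polynomial.C b)) * Polynomial.X +
          Polynomial.C (Polynomial.C (p.coeff 0)) := by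
      conv_lhs => rw [hpe]
      simp
    rw [map_Fpoly, slice_zero_Fpoly _ _ C_comp_C_eq_mapRingHom_comp_C, ← hp,
      Polynomial.coe_mapRingHom, Polynomial.map_X, hmap, CharTwo.sub_eq_add, CharTwo.sub_eq_add, he]
    simp only [Polynomial.C_add, Polynomial.C_mul, Polynomial.C_1]
    ring
  have hdeg := Polynomial.natDegree_quadratic
    (b := e * Polynomial.C (Polynomial.C b))
    (c := e * ((p.coeff 0).map Polynomial.C + Polynomial.C (p.coeff 0)))
    (one_ne_zero (α := (AlgebraicClosure K)[X][X]))
  have hlead := Polynomial.leadingCoeff_quadratic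
    (b := e * Polynomial.C (Polynomial.C b))
    (c := e * ((p.coeff 0).map Polynomial.C + Polynomial.C (p.coeff 0)))
    (one_ne_zero (α := (AlgebraicClosure K)[X][X]))
  rw [← hslice] at hdeg hlead
  have hmonic : (slice Polynomial.C (Polynomial.mapRingHom Polynomial.C) 0
      (map (algebraMap K (AlgebraicClosure K)) (Fpoly f d))).Monic := hlead
  have hirr : Irreducible (slice Polynomial.C (Polynomial.mapRingHom Polynomial.C) 0
      (map (algebraMap K (AlgebraicClosure K)) (Fpoly f d))) := by
    rw [hmonic.irreducible_iff_roots_eq_zero_of_degree_le_three (by omega) (by omega),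
      Multiset.eq_zero_iff_forall_notMem]
    intro r hr
    have hroot := (Polynomial.mem_roots'.mp hr).2
    rw [hslice, Polynomial.IsRoot.def] at hroot
    simp only [Polynomial.eval_add, Polynomial.eval_mul, Polynomial.eval_C, Polynomial.eval_pow,
      Polynomial.eval_X, one_mul] at hroot
    apply not_root_quadratic (p.coeff 0) h0 b r
    rw [add_assoc, CharTwo.add_eq_zero] at hroot
    rw [hroot]
    ring
  refine hasAbsIrrComponent_of_degree _ Polynomial.natDegree (by simp)
    (fun a b ha hb => Polynomial.natDegree_mul ha hb) ?_ 0 (by simp) (by omega) ?_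
  · intro σ a
    exact Polynomial.natDegree_map_eq_of_injective
      (Polynomial.map_injective _ (Polynomial.map_injective _ σ.injective)) a
  · rintro a c ⟨r, hr⟩ ha hc
    rw [mul_assoc] at hr
    rcases hirr.isUnit_or_isUnit hr with hu | hu
    · rw [Polynomial.natDegree_eq_zero_of_isUnit hu] at ha
      exact lt_irrefl _ ha
    · rw [Polynomial.natDegree_eq_zero_of_isUnit (isUnit_of_mul_isUnit_left hu)] at hc
      exact lt_irrefl _ hc

end Cases


/-- Characteristic two: if some coefficient `a_{i,j}` with `(i,j) ∉ {(1,0),(0,1)}` is nonzero,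
then `S_f` contains an absolutely irreducible component defined over `F_q = F_{2^h}`. -/
theorem statement3 (h q : ℕ) (hh : 0 < h) (hq : q = 2 ^ h)
    (K : Type*) [Field K] [Fintype K] (hcard : Fintype.card K = q)
    (f : MvPolynomial (Fin 2) K) (d : ℕ) (hdeg : f.totalDegree = d) (hd : 1 ≤ d)
    (h00 : coeffXY f 0 0 = 0)
    (hex : ∃ i j : ℕ, (i, j) ≠ (1, 0) ∧ (i, j) ≠ (0, 1) ∧ coeffXY f i j ≠ 0) :
    HasAbsIrrComponent (Fpoly f d) := by
  have hchar : CharP K 2 := by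
    have hp : Fact (Nat.Prime 2) := ⟨Nat.prime_two⟩
    exact charP_of_card_eq_prime_pow (hcard.trans hq)
  set p := toIterated (map (algebraMap K (AlgebraicClosure K)) f) with hp
  have hcoeff : ∀ i j, (p.coeff j).coeff i = algebraMap K (AlgebraicClosure K) (coeffXY f i j) := by
    intro i j
    rw [hp, coeff_coeff_toIterated, coeffXY, coeffXY, coeff_map]
  rcases le_or_gt 2 p.natDegree with hn | hn
  · exact hasAbsIrrComponent_of_two_le_natDegree f d hn
  have hn1 : p.natDegree ≤ 1 := by omega
  rcases Nat.eq_zero_or_pos (p.coeff 1).natDegree with h1 | h1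
  · refine hasAbsIrrComponent_of_coeff_one_eq_C f d _ hn1
      (Polynomial.eq_C_of_natDegree_eq_zero h1) ?_
    obtain ⟨i, j, h10, h01, hij⟩ := hex
    have hne : (p.coeff j).coeff i ≠ 0 := by
      rw [hcoeff]
      simpa using hij
    have hj1 : j ≤ 1 := by
      by_contra hj
      rw [Polynomial.coeff_eq_zero_of_natDegree_lt (show p.natDegree < j by omega),
        Polynomial.coeff_zero] at hne
      exact hne rfl
    have hi := Polynomial.le_natDegree_of_ne_zero hne
    interval_cases j
    · refine le_trans ?_ hi
      by_contra hi2
      have hi1 : i < 2 := by omega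
      interval_cases i
      · exact hij h00
      · exact h10 rfl
    · rw [h1, Nat.le_zero] at hi
      exact absurd (by rw [hi]) h01
  · exact hasAbsIrrComponent_of_natDegree_coeff_one f d hn1 h1
end

section
/- Let q = p^h with p an odd prime and let f(X,Y) = Σ_{i,j} a_{i,j} X^i Y^j ∈ F_q[X,Y] have total degree d ≥ 1, a_{0,0} = 0, and a_{0,1} = 0. If d is not a power of p, or there exists a pair (i,j) ≠ (d,0) with a_{i,j} ≠ 0, then the hypersurface S_f contains an absolutely irreducible component defined over F_q; that is, there is a nonconstant polynomial g ∈ F_q[X_0,X_1,X_2,X_3,X_4] dividing F that remains irreducible over the algebraic closure of F_q. -/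
open MvPolynomial

namespace FiniteField

theorem mem_range_algebraMap_of_pow_card_eq {K L : Type*} [Field K] [Fintype K] [Field L]
    [Algebra K L] {x : L} (hx : x ^ Fintype.card K = x) : x ∈ Set.range (algebraMap K L) := by
  have h0 : (Polynomial.X ^ Fintype.card K - Polynomial.X : Polynomial K) ≠ 0 :=
    FiniteField.X_pow_card_sub_X_ne_zero K Fintype.one_lt_card
  have hroots := Polynomial.roots_map_of_injective_of_card_eq_natDegree
    (algebraMap K L).injective
    (p := (Polynomial.X ^ Fintype.card K - Polynomial.X : Polynomial K)) (by
      rw [FiniteField.roots_X_pow_card_sub_X,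
        FiniteField.X_pow_card_sub_X_natDegree_eq K Fintype.one_lt_card]
      rfl)
  have hmem : x ∈ ((Polynomial.X ^ Fintype.card K - Polynomial.X : Polynomial K).map
      (algebraMap K L)).roots := by
    rw [Polynomial.mem_roots (Polynomial.map_ne_zero h0)]
    simp [hx]
  rw [← hroots, Multiset.mem_map] at hmem
  obtain ⟨a, -, rfl⟩ := hmem
  exact ⟨a, rfl⟩

end FiniteField

namespace MvPolynomial

theorem exists_map_eq_of_map_frobenius_eq {K L ι : Type*} [Field K] [Fintype K] [Field L]
    [Algebra K L] {σ : L →+* L} (hσ : ∀ x, σ x = x ^ Fintype.card K) {G : MvPolynomial ι L}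
    (hG : map σ G = G) : ∃ g : MvPolynomial ι K, map (algebraMap K L) g = G := by
  rw [← Set.mem_range, mem_range_map_iff_coeffs_subset]
  intro c hc
  obtain ⟨m, -, rfl⟩ := mem_coeffs_iff.mp hc
  refine FiniteField.mem_range_algebraMap_of_pow_card_eq ?_
  rw [← hσ, ← coeff_map, hG]

theorem exists_map_dvd_of_associated_map_frobenius {K L ι : Type*} [Field K] [Fintype K]
    [Field L] [Algebra K L] {σ : L →+* L} (hσ : ∀ x, σ x = x ^ Fintype.card K)
    {F : MvPolynomial ι K} {G : MvPolynomial ι L} (hG0 : G ≠ 0)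
    (hGF : G ∣ map (algebraMap K L) F) (hassoc : Associated G (map σ G)) :
    ∃ g : MvPolynomial ι K, g ∣ F ∧ Associated G (map (algebraMap K L) g) := by
  have hσK : σ.comp (algebraMap K L) = algebraMap K L := by
    ext x
    simp [hσ, ← map_pow, FiniteField.pow_card]
  obtain ⟨m, hm⟩ := ne_zero_iff.mp hG0
  set G' : MvPolynomial ι L := C (coeff m G)⁻¹ * G with hG'
  have hunit : IsUnit (C (σ := ι) (coeff m G)⁻¹) := (isUnit_iff_ne_zero.mpr (inv_ne_zero hm)).map C
  have hGG' : Associated G G' := (associated_unit_mul_left G _ hunit).symm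
  have hG'm : coeff m G' = 1 := by simp [hG', hm]
  have hfix : map σ G' = G' := by
    have h1 : Associated G' (map σ G') :=
      hGG'.symm.trans (hassoc.trans (hGG'.map (map σ)))
    obtain ⟨u, hu⟩ := h1
    obtain ⟨c, hc, huc⟩ := (isUnit_iff_eq_C_of_isReduced).mp u.isUnit
    have h2 := congrArg (coeff m) hu
    rw [huc, mul_comm, coeff_C_mul, coeff_map, hG'm, map_one, mul_one] at h2
    rw [← hu, huc, h2, C_1, mul_one]
  obtain ⟨g, hg⟩ := exists_map_eq_of_map_frobenius_eq hσ hfix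
  obtain ⟨H, hH⟩ := hGG'.dvd_iff_dvd_left.mp hGF
  have hHfix : map σ H = H := by
    have h3 := congrArg (map σ) hH
    rw [map_map, hσK, map_mul, hfix, hH] at h3
    exact (mul_left_cancel₀ (hGG'.ne_zero_iff.mp hG0) h3).symm
  obtain ⟨h, hh⟩ := exists_map_eq_of_map_frobenius_eq hσ hHfix
  refine ⟨g, ⟨h, ?_⟩, hg ▸ hGG'⟩
  apply map_injective _ (algebraMap K L).injective
  rw [hH, map_mul, hg, hh]

/-- An additive function on nonzero elements that is positive on `e F` is positive on the image
of some irreducible factor of `F`. -/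
theorem exists_irreducible_dvd_of_pos {R A : Type*} [CommRing R] [IsDomain R]
    [WfDvdMonoid R] [CommRing A] [IsDomain A] (e : R →+* A) (ν : A → ℕ)
    (hν : ∀ a b, a ≠ 0 → b ≠ 0 → ν (a * b) = ν a + ν b) {F : R} (hF0 : e F ≠ 0)
    (hF : 0 < ν (e F)) : ∃ G, Irreducible G ∧ G ∣ F ∧ 0 < ν (e G) := by
  induction F using WfDvdMonoid.induction_on_irreducible with
  | zero => simp at hF0
  | unit u hu =>
    exfalso
    obtain ⟨v, hv⟩ := (hu.map e).exists_right_inv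
    have h1 : ν 1 = 0 := by simpa using hν 1 1 one_ne_zero one_ne_zero
    have h2 := hν _ v hF0 (right_ne_zero_of_mul_eq_one hv)
    rw [hv, h1] at h2
    omega
  | mul a i ha hi ih =>
    rw [map_mul] at hF0 hF
    rw [hν _ _ (left_ne_zero_of_mul hF0) (right_ne_zero_of_mul hF0)] at hF
    by_cases h : 0 < ν (e i)
    · exact ⟨i, hi, dvd_mul_right _ _, h⟩
    · obtain ⟨G, hG, hGa, hpos⟩ := ih (right_ne_zero_of_mul hF0) (by omega)
      exact ⟨G, hG, hGa.mul_left _, hpos⟩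

end MvPolynomial

namespace Polynomial
open Polynomial.Bivariate

theorem natDegree_map_C_sub_C {k : Type*} [CommRing k] (f : k[X]) :
    (f.map C - C f).natDegree = f.natDegree := by
  rw [natDegree_sub_C, natDegree_map_eq_of_injective C_injective]

/-- If `(y - x) (f(y) - f(x))` is a square in `k[x, y]` and `f' ≠ 0`, then `f` is linear. -/
theorem natDegree_eq_one_of_sq_of_derivative_ne_zero {k : Type*} [Field k] {f : k[X]}
    {s : k[X][Y]} (hs : (X - C X) * (f.map C - C f) = s ^ 2) (hf : derivative f ≠ 0) :
    f.natDegree = 1 := by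
  have hprime : Prime (X - C X : k[X][Y]) := prime_X_sub_C X
  obtain ⟨t, rfl⟩ : (X - C X : k[X][Y]) ∣ s := hprime.dvd_of_dvd_pow ⟨_, hs.symm⟩
  have ht : f.map C - C f = (X - C X) * t ^ 2 :=
    mul_left_cancel₀ hprime.ne_zero (by rw [hs]; ring)
  have hdvd : t ∣ (derivative f).map C := by
    have h := congrArg derivative ht
    simp only [derivative_sub, derivative_map, derivative_C, derivative_mul, derivative_X,
      derivative_pow, sub_zero, one_mul] at h
    rw [h]
    refine dvd_add (dvd_pow_self t two_ne_zero) (Dvd.dvd.mul_left ?_ _)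
    exact ((dvd_pow_self t one_ne_zero).mul_left _).mul_right _
  have hswap : swap t ^ 2 = t ^ 2 := by
    have h := congrArg (swap (R := k)) ht
    simp only [map_sub, map_mul, map_pow, Bivariate.swap_map_C, Bivariate.swap_C,
      Bivariate.swap_Y, Polynomial.map_X] at h
    refine mul_left_cancel₀ hprime.ne_zero ?_
    linear_combination ht + h
  have hdvd' : t ∣ C (derivative f) := by
    have h : swap t ∣ C (derivative f) := by
      rw [← Bivariate.swap_map_C]
      exact _root_.map_dvd (swap (R := k)) hdvd
    rcases sq_eq_sq_iff_eq_or_eq_neg.mp hswap with h' | h' 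
    · rwa [h'] at h
    · rw [h'] at h
      exact (Dvd.intro (-1) (by ring)).trans h
  have htdeg : t.natDegree = 0 := by
    have h := natDegree_le_of_dvd hdvd' (C_ne_zero.mpr hf)
    simpa using h
  have ht0 : t ≠ 0 := by
    rintro rfl
    exact hf (by simpa [Polynomial.map_eq_zero_iff (C_injective (R := k))] using hdvd)
  rw [← natDegree_map_C_sub_C, ht, natDegree_mul hprime.ne_zero (pow_ne_zero _ ht0),
    natDegree_pow, htdeg, natDegree_X_sub_C]

/-- Over a perfect field of odd characteristic `p`, if `(y - x) (f(y) - f(x))` is a square in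
`k[x, y]`, then `f = a X ^ (p ^ l) + b`. -/
theorem eq_C_mul_X_pow_add_C_of_sq {k : Type*} [Field k] (p : ℕ) [Fact p.Prime] [CharP k p]
    [PerfectRing k p] (hp : Odd p) {f : k[X]} (hf : f.natDegree ≠ 0) {s : k[X][Y]}
    (hs : (X - C X) * (f.map C - C f) = s ^ 2) :
    ∃ (l : ℕ) (a b : k), f = C a * X ^ p ^ l + C b := by
  induction hn : f.natDegree using Nat.strong_induction_on generalizing f s with
  | _ n ih =>
  by_cases hder : derivative f = 0
  · obtain ⟨g, rfl⟩ : ∃ g : k[X], f = g ^ p := by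
      rw [← expand_contract p hder (Fact.out : p.Prime).ne_zero]
      exact ⟨_, polynomial_expand_eq k p _⟩
    rw [natDegree_pow] at hf hn
    have hg : g.natDegree ≠ 0 := right_ne_zero_of_mul hf
    have hw : (g ^ p).map C - C (g ^ p) = (g.map C - C g) ^ p := by
      rw [sub_pow_char, Polynomial.map_pow, C_pow]
    have hw0 : g.map C - C g ≠ 0 := by
      intro h
      rw [← natDegree_map_C_sub_C, h, natDegree_zero] at hg
      exact hg rfl
    obtain ⟨r, hr⟩ := hp
    have hs' : (X - C X) * (g.map C - C g) * ((g.map C - C g) ^ r) ^ 2 = s ^ 2 := by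
      rw [← hs, hw, hr]; ring
    obtain ⟨t, rfl⟩ : (g.map C - C g) ^ r ∣ s :=
      (UniqueFactorizationMonoid.pow_dvd_pow_iff_dvd two_ne_zero).mp ⟨_, by rw [← hs', mul_comm]⟩
    obtain ⟨l, a, b, rfl⟩ := ih g.natDegree
      (by rw [← hn]; exact lt_mul_of_one_lt_left (Nat.pos_of_ne_zero hg)
            (Fact.out : p.Prime).one_lt) hg (s := t)
      (mul_right_cancel₀ (pow_ne_zero 2 (pow_ne_zero r hw0)) (by rw [hs']; ring)) rfl
    refine ⟨l + 1, a ^ p, b ^ p, ?_⟩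
    rw [add_pow_char, mul_pow, ← pow_mul, pow_succ, C_pow, C_pow]
  · have h1 := natDegree_eq_one_of_sq_of_derivative_ne_zero hs hder
    obtain ⟨a, -, b, rfl⟩ := natDegree_eq_one.mp h1
    exact ⟨0, a, b, by simp⟩

end Polynomial

theorem Polynomial.natTrailingDegree_map_of_injective {R S : Type*} [Semiring R] [Semiring S]
    {φ : R →+* S} (hφ : Function.Injective φ) (g : Polynomial R) :
    (g.map φ).natTrailingDegree = g.natTrailingDegree := by
  simp only [Polynomial.natTrailingDegree, Polynomial.trailingDegree,
    Polynomial.support_map_of_injective g hφ]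

theorem MvPolynomial.eval₂Hom_map_eq_apply_eval₂Hom {ι L A : Type*} [CommSemiring L]
    [CommSemiring A] {j : L →+* A} {σ : L →+* L} {τ : A →+* A} {v : ι → A}
    (hτ : ∀ c, τ (j c) = j (σ c)) (hv : ∀ i, τ (v i) = v i) (G : MvPolynomial ι L) :
    eval₂Hom j v (map σ G) = τ (eval₂Hom j v G) := by
  induction G using MvPolynomial.induction_on with
  | C a => simp [hτ]
  | add p q hp hq => rw [map_add, map_add, map_add, map_add, hp, hq]
  | mul_X p i hp => rw [map_mul, map_mul, map_mul, map_mul, hp, map_X, eval₂Hom_X', hv]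

theorem single_add_single_fin_two (m : Fin 2 →₀ ℕ) :
    Finsupp.single (0 : Fin 2) (m 0) + Finsupp.single (1 : Fin 2) (m 1) = m := by
  ext i
  fin_cases i <;> simp

theorem coeffXY_apply {K : Type*} [Field K] (f : MvPolynomial (Fin 2) K) (m : Fin 2 →₀ ℕ) :
    coeffXY f (m 0) (m 1) = coeff m f := by
  rw [coeffXY, single_add_single_fin_two]

theorem finsupp_fin_two_ext {m n : Fin 2 →₀ ℕ} (h0 : m 0 = n 0) (h1 : m 1 = n 1) : m = n := by
  ext i
  fin_cases i <;> assumption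

theorem eval₂Hom_map_Fpoly {K L A : Type*} [Field K] [Field L] [Algebra K L] [CommRing A]
    (j : L →+* A) (f : MvPolynomial (Fin 2) K) (d : ℕ) {v : Fin 5 → A} (hv : v 0 = 1) :
    eval₂Hom j v (map (algebraMap K L) (Fpoly f d)) =
      (v 2 - v 4) ^ 2 + (v 1 - v 3) * ∑ m ∈ f.support, j (algebraMap K L (coeff m f)) *
        (v 1 ^ m 0 * v 2 ^ m 1 - v 3 ^ m 0 * v 4 ^ m 1) := by
  simp [Fpoly, hv]

section WeightedImage

variable {L : Type*} [Field L]

/-- The image of `F` in `R[T]` under `X₀ = 1`, `X₁ = x T²`, `X₂ = T^{d+1}`,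
`X₃ = (x - u) T²`, `X₄ = 0`, for `f = Σ_{m ∈ s} a_m X^{m₀} Y^{m₁}`. -/
noncomputable def weightedImage {R : Type*} [CommRing R] (x u : R) (s : Finset (Fin 2 →₀ ℕ))
    (a : (Fin 2 →₀ ℕ) → R) (d : ℕ) : Polynomial R :=
  Polynomial.X ^ (2 * d + 2) +
    ∑ m ∈ s, Polynomial.C (u * a m * x ^ m 0) * Polynomial.X ^ (2 * m 0 + (d + 1) * m 1 + 2) -
    ∑ m ∈ s, Polynomial.C (u * a m * (x - u) ^ m 0 * 0 ^ m 1) * Polynomial.X ^ (2 * m 0 + 2)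

/-- With weights `2` for `X` and `d + 1` for `Y`, the leading form of `F` is divisible exactly
once by `u = X₁ - X₃` as soon as some monomial of `f` has weight larger than `2 d`. -/
theorem natTrailingDegree_leadingCoeff_weightedImage {s : Finset (Fin 2 →₀ ℕ)}
    {a : (Fin 2 →₀ ℕ) → L} {d : ℕ} (hle : ∀ m ∈ s, m 0 ≤ d) {M : Fin 2 →₀ ℕ} (hM : M ∈ s)
    (haM : a M ≠ 0)
    (hmax : ∀ m ∈ s, 2 * m 0 + (d + 1) * m 1 ≤ 2 * M 0 + (d + 1) * M 1)
    (hMd : 2 * d < 2 * M 0 + (d + 1) * M 1) :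
    (weightedImage (Polynomial.C Polynomial.X) Polynomial.X s
      (fun m => Polynomial.C (Polynomial.C (a m))) d).leadingCoeff.natTrailingDegree = 1 := by
  obtain ⟨lead, hlead_def⟩ : ∃ lead : Polynomial L, lead = ∑ m ∈ s,
    if 2 * M 0 + (d + 1) * M 1 = 2 * m 0 + (d + 1) * m 1 then
      Polynomial.C (a m) * Polynomial.X ^ m 0 else 0 := ⟨_, rfl⟩
  have hlead : lead ≠ 0 := by
    intro h
    have h1 := congrArg (fun g => Polynomial.coeff g (M 0)) h
    simp only [hlead_def, Polynomial.finsetSum_coeff, Polynomial.coeff_zero] at h1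
    rw [Finset.sum_eq_single M] at h1
    · simp [haM] at h1
    · intro m _ hmM
      split_ifs with hw
      · rw [Polynomial.coeff_C_mul_X_pow, if_neg]
        intro h0
        refine hmM (finsupp_fin_two_ext h0.symm ?_)
        rw [h0] at hw
        exact (Nat.eq_of_mul_eq_mul_left d.succ_pos (Nat.add_left_cancel hw)).symm
      · simp
    · exact fun h => (h hM).elim
  have hcoeff : ∀ N, 2 * M 0 + (d + 1) * M 1 + 2 ≤ N →
      (weightedImage (Polynomial.C Polynomial.X) Polynomial.X s
      (fun m => Polynomial.C (Polynomial.C (a m))) d).coeff N =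
      ∑ m ∈ s, if N = 2 * m 0 + (d + 1) * m 1 + 2 then
        Polynomial.X * Polynomial.C (Polynomial.C (a m)) * Polynomial.C Polynomial.X ^ m 0
          else 0 := by
    intro N hN
    simp only [weightedImage, Polynomial.coeff_sub, Polynomial.coeff_add,
      Polynomial.finsetSum_coeff, Polynomial.coeff_C_mul_X_pow, Polynomial.coeff_X_pow]
    rw [if_neg (by omega), zero_add, sub_eq_self]
    refine Finset.sum_eq_zero fun m hm => if_neg ?_
    have := hle m hm
    omega
  have htop : (weightedImage (Polynomial.C Polynomial.X) Polynomial.X s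
      (fun m => Polynomial.C (Polynomial.C (a m))) d).coeff (2 * M 0 + (d + 1) * M 1 + 2) =
      Polynomial.X * Polynomial.C lead := by
    rw [hcoeff _ le_rfl, hlead_def, map_sum, Finset.mul_sum]
    refine Finset.sum_congr rfl fun m _ => ?_
    simp only [Nat.add_right_cancel_iff]
    split_ifs with hw
    · rw [Polynomial.C_mul, Polynomial.C_pow, mul_assoc]
    · simp
  have hdeg : (weightedImage (Polynomial.C Polynomial.X) Polynomial.X s
      (fun m => Polynomial.C (Polynomial.C (a m))) d).natDegree = 2 * M 0 + (d + 1) * M 1 + 2 := by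
    refine Polynomial.natDegree_eq_of_le_of_coeff_ne_zero ?_ ?_
    · rw [Polynomial.natDegree_le_iff_coeff_eq_zero]
      intro N hN
      rw [hcoeff N hN.le]
      refine Finset.sum_eq_zero fun m hm => if_neg ?_
      have := hmax m hm
      omega
    · rw [htop]
      exact mul_ne_zero Polynomial.X_ne_zero (Polynomial.C_ne_zero.mpr hlead)
  rw [Polynomial.leadingCoeff, hdeg, htop, Polynomial.natTrailingDegree_mul
    Polynomial.X_ne_zero (Polynomial.C_ne_zero.mpr hlead), Polynomial.natTrailingDegree_X,
    Polynomial.natTrailingDegree_C]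

end WeightedImage

theorem mul_map_frobenius_dvd {K : Type*} [Field K] [Fintype K]
    {F : MvPolynomial (Fin 5) K} (hF : ¬ HasAbsIrrComponent F)
    {σ : AlgebraicClosure K →+* AlgebraicClosure K} (hσ : ∀ x, σ x = x ^ Fintype.card K)
    (hσ' : Function.Bijective σ)
    {G : MvPolynomial (Fin 5) (AlgebraicClosure K)} (hG : Irreducible G)
    (hGF : G ∣ map (algebraMap K (AlgebraicClosure K)) F) :
    G * map σ G ∣ map (algebraMap K (AlgebraicClosure K)) F := by
  have hσK : σ.comp (algebraMap K (AlgebraicClosure K)) = algebraMap K _ := by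
    ext x
    simp [hσ, ← map_pow, FiniteField.pow_card]
  have hσG : Irreducible (map σ G) :=
    (MulEquiv.irreducible_iff (mapEquiv (Fin 5) (RingEquiv.ofBijective σ hσ'))).mpr hG
  have hσGF : map σ G ∣ map (algebraMap K (AlgebraicClosure K)) F := by
    have h := map_dvd (map σ) hGF
    rwa [map_map, hσK] at h
  obtain ⟨H, hH⟩ := hGF
  rw [hH] at hσGF ⊢
  rcases hσG.prime.dvd_or_dvd hσGF with h | h
  · exfalso
    obtain ⟨g, hgF, hg⟩ := exists_map_dvd_of_associated_map_frobenius hσ hG.ne_zero ⟨H, hH⟩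
      (hσG.associated_of_dvd hG h).symm
    have hirr := hg.irreducible hG
    refine hF ⟨g, hgF, Nat.pos_of_ne_zero fun h0 => ?_, hirr⟩
    rw [totalDegree_eq_zero_iff_eq_C.mp h0, map_C] at hirr
    refine hirr.not_isUnit (IsUnit.map C (isUnit_iff_ne_zero.mpr fun h1 => ?_))
    exact hirr.ne_zero (by rw [h1, C_0])
  · exact mul_dvd_mul_left G h

theorem exists_bijective_frobenius (K : Type*) [Field K] [Fintype K] :
    ∃ σ : AlgebraicClosure K →+* AlgebraicClosure K,
      (∀ x, σ x = x ^ Fintype.card K) ∧ Function.Bijective σ :=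
  ⟨(FiniteField.frobeniusAlgEquivOfAlgebraic K (AlgebraicClosure K)).toRingEquiv.toRingHom,
    fun _ => rfl, (FiniteField.frobeniusAlgEquivOfAlgebraic K (AlgebraicClosure K)).bijective⟩

theorem Polynomial.exists_sq_add_eq_zero_of_dvd {R : Type*} [CommRing R] [IsDomain R] {c : R}
    {g : Polynomial R} (hg : g ∣ Polynomial.X ^ 2 + Polynomial.C c) (hdeg : g.natDegree = 1) :
    ∃ r, r ^ 2 + c = 0 := by
  obtain ⟨h, hh⟩ := hg
  have hlc : g.leadingCoeff * h.leadingCoeff = 1 := by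
    rw [← Polynomial.leadingCoeff_mul, ← hh]
    exact Polynomial.monic_X_pow_add_C c two_ne_zero
  obtain ⟨a, -, b, rfl⟩ := Polynomial.natDegree_eq_one.mp hdeg
  refine ⟨-b * h.leadingCoeff, ?_⟩
  have ha : a * h.leadingCoeff = 1 := by
    rwa [Polynomial.leadingCoeff, hdeg, Polynomial.coeff_add, Polynomial.coeff_C_mul,
      Polynomial.coeff_X_one, Polynomial.coeff_C_of_ne_zero one_ne_zero, mul_one, add_zero] at hlc
  have h2 := congrArg (Polynomial.eval (-b * h.leadingCoeff)) hh
  simp only [Polynomial.eval_add, Polynomial.eval_mul, Polynomial.eval_pow, Polynomial.eval_C,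
    Polynomial.eval_X] at h2
  rw [h2]
  linear_combination (-b) * (Polynomial.eval (-b * h.leadingCoeff) h) * ha

section ConjugateFactor

variable {K L : Type*} [Field K] [Field L] [Algebra K L]

/-- Suppose that the product of every irreducible factor of `F` with its conjugate divides `F`.
Then every conjugation-invariant additive function that is positive on `F` is positive on some
factor of `F`, where its value is at most half the value on `F`. -/
theorem exists_dvd_two_mul_le {F : MvPolynomial (Fin 5) L} {σ : L →+* L}
    (hF : ∀ G, Irreducible G → G ∣ F → G * map σ G ∣ F)
    {A : Type*} [CommRing A] [IsDomain A] {j : L →+* A} {v : Fin 5 → A} {τ : A →+* A}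
    (hτ : ∀ c, τ (j c) = j (σ c)) (hv : ∀ i, τ (v i) = v i)
    {ν : A → ℕ} (hν : ∀ a b, a ≠ 0 → b ≠ 0 → ν (a * b) = ν a + ν b) (hντ : ∀ a, ν (τ a) = ν a)
    (hF0 : eval₂Hom j v F ≠ 0) (hpos : 0 < ν (eval₂Hom j v F)) :
    ∃ G, G ∣ F ∧ 0 < ν (eval₂Hom j v G) ∧
      2 * ν (eval₂Hom j v G) ≤ ν (eval₂Hom j v F) := by
  obtain ⟨G, hG, hGF, hGpos⟩ := exists_irreducible_dvd_of_pos (eval₂Hom j v) ν hν hF0 hpos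
  refine ⟨G, hGF, hGpos, ?_⟩
  obtain ⟨H, hH⟩ := hF G hG hGF
  rw [hH, map_mul] at hF0 ⊢
  have h1 := left_ne_zero_of_mul hF0
  rw [hν _ _ h1 (right_ne_zero_of_mul hF0)]
  rw [map_mul] at h1 ⊢
  rw [hν _ _ (left_ne_zero_of_mul h1) (right_ne_zero_of_mul h1),
    eval₂Hom_map_eq_apply_eval₂Hom hτ hv, hντ]
  omega

theorem apply_leadingCoeff_weightedImage_ne_one {f : MvPolynomial (Fin 2) K} {d : ℕ}
    {σ : L →+* L}
    (hF : ∀ G, Irreducible G → G ∣ map (algebraMap K L) (Fpoly f d) →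
      G * map σ G ∣ map (algebraMap K L) (Fpoly f d))
    {R : Type*} [CommRing R] [IsDomain R] {j : L →+* R} {τ : R →+* R}
    (hinj : Function.Injective τ) (hτ : ∀ c, τ (j c) = j (σ c))
    {x u : R} (hx : τ x = x) (hu : τ u = u)
    {ν : R → ℕ} (hν0 : ν 0 = 0) (hν : ∀ a b, a ≠ 0 → b ≠ 0 → ν (a * b) = ν a + ν b)
    (hντ : ∀ a, ν (τ a) = ν a) :
    ν (weightedImage x u f.support (fun m => j (algebraMap K L (coeff m f))) d).leadingCoeff
      ≠ 1 := by
  intro hone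
  let v : Fin 5 → Polynomial R :=
    ![1, Polynomial.C x * Polynomial.X ^ 2, Polynomial.X ^ (d + 1),
      Polynomial.C (x - u) * Polynomial.X ^ 2, 0]
  have hexp : eval₂Hom (Polynomial.C.comp j) v (map (algebraMap K L) (Fpoly f d)) =
      weightedImage x u f.support (fun m => j (algebraMap K L (coeff m f))) d := by
    rw [eval₂Hom_map_Fpoly _ _ _ rfl, weightedImage, add_sub_assoc, ← Finset.sum_sub_distrib,
      Finset.mul_sum]
    congr 1
    · simp only [v, Matrix.cons_val]
      ring
    · refine Finset.sum_congr rfl fun m _ => ?_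
      simp only [v, Matrix.cons_val, RingHom.comp_apply, Polynomial.C_mul, Polynomial.C_pow,
        Polynomial.C_sub, Polynomial.C_0, mul_pow]
      ring
  rw [← hexp] at hone
  obtain ⟨G, -, hG, hG2⟩ := exists_dvd_two_mul_le hF (v := v) (j := Polynomial.C.comp j)
    (τ := Polynomial.mapRingHom τ) (ν := fun g => ν g.leadingCoeff)
    (fun c => by simp [hτ])
    (fun i => by fin_cases i <;> simp [v, hx, hu])
    (fun g h hg hh => by
      rw [Polynomial.leadingCoeff_mul, hν _ _ (Polynomial.leadingCoeff_ne_zero.mpr hg)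
        (Polynomial.leadingCoeff_ne_zero.mpr hh)])
    (fun g => by
      rw [Polynomial.coe_mapRingHom, Polynomial.leadingCoeff_map_of_injective hinj, hντ])
    (fun h => by rw [h, Polynomial.leadingCoeff_zero, hν0] at hone; exact zero_ne_one hone)
    (by rw [hone]; exact one_pos)
  rw [hone] at hG2
  omega

theorem weight_le_of_forall_mul_map_dvd {f : MvPolynomial (Fin 2) K} {d : ℕ}
    {σ : L →+* L}
    (hF : ∀ G, Irreducible G → G ∣ map (algebraMap K L) (Fpoly f d) →
      G * map σ G ∣ map (algebraMap K L) (Fpoly f d))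
    (hdeg : f.totalDegree = d) {m₀ : Fin 2 →₀ ℕ} (hm₀ : m₀ ∈ f.support) :
    2 * m₀ 0 + (d + 1) * m₀ 1 ≤ 2 * d := by
  by_contra! hlt
  obtain ⟨M, hM, hmax⟩ := f.support.exists_max_image
    (fun m => 2 * m 0 + (d + 1) * m 1) ⟨m₀, hm₀⟩
  have hle : ∀ m ∈ f.support, m 0 ≤ d := fun m hm => by
    have h := le_totalDegree hm
    rw [hdeg, Finsupp.sum_fintype _ _ (fun _ => rfl), Fin.sum_univ_two] at h
    omega
  have hinj : Function.Injective (Polynomial.mapRingHom σ) :=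
    Polynomial.map_injective _ σ.injective
  refine apply_leadingCoeff_weightedImage_ne_one hF (j := Polynomial.C.comp Polynomial.C)
    (τ := Polynomial.mapRingHom (Polynomial.mapRingHom σ))
    (x := Polynomial.C Polynomial.X) (u := Polynomial.X) (ν := Polynomial.natTrailingDegree)
    (Polynomial.map_injective _ hinj) (fun c => by simp) (by simp) (by simp)
    Polynomial.natTrailingDegree_zero
    (fun g h hg hh => Polynomial.natTrailingDegree_mul hg hh)
    (fun g => Polynomial.natTrailingDegree_map_of_injective hinj g)
    (natTrailingDegree_leadingCoeff_weightedImage hle hM (by simpa using hM) hmax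
      (hlt.trans_le (hmax m₀ hm₀)))

/-- If `f` is linear in `Y` with nonconstant coefficient, then `F` becomes linear in `y` after
setting `X₀ = 1`, `X₂ = X₄ = y`, `X₃ = 0`. -/
theorem eq_zero_of_forall_mul_map_dvd {f : MvPolynomial (Fin 2) K} {d : ℕ}
    {σ : L →+* L}
    (hF : ∀ G, Irreducible G → G ∣ map (algebraMap K L) (Fpoly f d) →
      G * map σ G ∣ map (algebraMap K L) (Fpoly f d))
    (hlin : ∀ m ∈ f.support, m 1 ≤ 1) {M : Fin 2 →₀ ℕ} (hM : M ∈ f.support)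
    (hM1 : M 1 = 1) : M 0 = 0 := by
  by_contra hM0
  let a : (Fin 2 →₀ ℕ) → L := fun m => algebraMap K L (coeff m f)
  let z : Polynomial L := Polynomial.X
  let v : Fin 5 → Polynomial (Polynomial L) :=
    ![1, Polynomial.C z, Polynomial.X, 0, Polynomial.X]
  let τ := Polynomial.mapRingHom (Polynomial.mapRingHom σ)
  set P := eval₂Hom (Polynomial.C.comp Polynomial.C) v (map (algebraMap K L) (Fpoly f d)) with hP
  have hexp : P = ∑ m ∈ f.support,
      Polynomial.C (z * (Polynomial.C (a m) * (z ^ m 0 - 0 ^ m 0))) * Polynomial.X ^ m 1 := by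
    rw [hP, eval₂Hom_map_Fpoly _ _ _ rfl, Finset.mul_sum]
    simp only [v, Matrix.cons_val, sub_self, zero_pow two_ne_zero, zero_add]
    refine Finset.sum_congr rfl fun m _ => ?_
    simp only [a, RingHom.comp_apply, Polynomial.C_mul, Polynomial.C_pow, Polynomial.C_sub, Polynomial.C_0]
    ring
  have hcoeff : P.coeff 1 ≠ 0 := by
    intro h
    rw [hexp, Polynomial.finsetSum_coeff] at h
    simp only [Polynomial.coeff_C_mul_X_pow] at h
    have h1 := congrArg (fun g => Polynomial.coeff g (M 0 + 1)) h
    simp only [Polynomial.finsetSum_coeff, Polynomial.coeff_zero] at h1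
    have hpow : ∀ n, (0 : Polynomial L) ^ n = Polynomial.C (0 ^ n) := fun n => by simp
    rw [Finset.sum_eq_single M] at h1
    · rw [if_pos hM1.symm, Polynomial.coeff_X_mul, Polynomial.coeff_C_mul, Polynomial.coeff_sub,
        Polynomial.coeff_X_pow_self, hpow, Polynomial.coeff_C_of_ne_zero hM0] at h1
      simp [a] at h1
      exact mem_support_iff.mp hM h1
    · intro m _ hmM
      split_ifs with hw
      · rw [Polynomial.coeff_X_mul, Polynomial.coeff_C_mul, Polynomial.coeff_sub,
          Polynomial.coeff_X_pow, hpow, Polynomial.coeff_C_of_ne_zero hM0, if_neg, sub_zero, mul_zero]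
        exact fun h0 => hmM (finsupp_fin_two_ext h0.symm (hw.symm.trans hM1.symm))
      · simp
    · exact fun h => (h hM).elim
  have hPdeg : P.natDegree = 1 := by
    refine Polynomial.natDegree_eq_of_le_of_coeff_ne_zero ?_ hcoeff
    rw [hexp]
    exact Polynomial.natDegree_sum_le_of_forall_le _ _ fun m hm =>
      (Polynomial.natDegree_C_mul_X_pow_le _ _).trans (hlin m hm)
  have hP0 : P ≠ 0 := fun h => hcoeff (by rw [h, Polynomial.coeff_zero])
  obtain ⟨G, -, hG, hG2⟩ := exists_dvd_two_mul_le hF (v := v) (τ := τ)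
    (j := Polynomial.C.comp Polynomial.C) (ν := Polynomial.natDegree)
    (fun c => by simp [τ])
    (fun i => by fin_cases i <;> simp [v, τ, z])
    (fun g h hg hh => Polynomial.natDegree_mul hg hh)
    (fun g => Polynomial.natDegree_map_eq_of_injective
      (Polynomial.map_injective _ σ.injective) g)
    hP0 (by rw [← hP, hPdeg]; exact one_pos)
  rw [← hP, hPdeg] at hG2
  omega

/-- If `f` does not involve `Y`, then `F` becomes `V² + (y - x) (f(y) - f(x))` after setting
`X₀ = 1`, `X₁ = y`, `X₂ = V`, `X₃ = x`, `X₄ = 0`. -/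
theorem exists_sq_add_eq_zero_of_forall_mul_map_dvd {f : MvPolynomial (Fin 2) K} {d : ℕ}
    {σ : L →+* L}
    (hF : ∀ G, Irreducible G → G ∣ map (algebraMap K L) (Fpoly f d) →
      G * map σ G ∣ map (algebraMap K L) (Fpoly f d))
    (hf : ∀ m ∈ f.support, m 1 = 0)
    {R : Type*} [CommRing R] [IsDomain R] {j : L →+* R} {τ : R →+* R}
    (hinj : Function.Injective τ) (hτ : ∀ c, τ (j c) = j (σ c))
    {x y : R} (hx : τ x = x) (hy : τ y = y) :
    ∃ r, r ^ 2 + (y - x) *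
      ∑ m ∈ f.support, j (algebraMap K L (coeff m f)) * (y ^ m 0 - x ^ m 0) = 0 := by
  let v : Fin 5 → Polynomial R := ![1, Polynomial.C y, Polynomial.X, Polynomial.C x, 0]
  have hP : eval₂Hom (Polynomial.C.comp j) v (map (algebraMap K L) (Fpoly f d)) =
      Polynomial.X ^ 2 + Polynomial.C ((y - x) *
        ∑ m ∈ f.support, j (algebraMap K L (coeff m f)) * (y ^ m 0 - x ^ m 0)) := by
    rw [eval₂Hom_map_Fpoly _ _ _ rfl, Polynomial.C_mul, map_sum]
    simp only [v, Matrix.cons_val, sub_zero, Polynomial.C_sub]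
    congr 2
    refine Finset.sum_congr rfl fun m hm => ?_
    simp only [hf m hm, RingHom.comp_apply, Polynomial.C_mul, Polynomial.C_sub,
      Polynomial.C_pow, pow_zero, mul_one]
  have hdeg : (eval₂Hom (Polynomial.C.comp j) v
      (map (algebraMap K L) (Fpoly f d))).natDegree = 2 := by
    rw [hP, Polynomial.natDegree_X_pow_add_C]
  obtain ⟨G, hGF, hG, hG2⟩ := exists_dvd_two_mul_le hF (v := v) (j := Polynomial.C.comp j)
    (τ := Polynomial.mapRingHom τ) (ν := Polynomial.natDegree)
    (fun c => by simp [hτ])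
    (fun i => by fin_cases i <;> simp [v, hx, hy])
    (fun g h hg hh => Polynomial.natDegree_mul hg hh)
    (fun g => Polynomial.natDegree_map_eq_of_injective hinj g)
    (fun h => by rw [h, Polynomial.natDegree_zero] at hdeg; exact two_ne_zero hdeg.symm)
    (by rw [hdeg]; exact two_pos)
  rw [hdeg] at hG2
  have hdvd := map_dvd (eval₂Hom (Polynomial.C.comp j) v) hGF
  rw [hP] at hdvd
  exact Polynomial.exists_sq_add_eq_zero_of_dvd hdvd (by omega)

theorem exists_sq_of_forall_mul_map_dvd [IsAlgClosed L] {f : MvPolynomial (Fin 2) K} {d : ℕ}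
    {σ : L →+* L}
    (hF : ∀ G, Irreducible G → G ∣ map (algebraMap K L) (Fpoly f d) →
      G * map σ G ∣ map (algebraMap K L) (Fpoly f d))
    (hf : ∀ m ∈ f.support, m 1 = 0) {f₀ : Polynomial L}
    (hf₀ : f₀ = ∑ m ∈ f.support,
      Polynomial.C (algebraMap K L (coeff m f)) * Polynomial.X ^ m 0) :
    ∃ s : Polynomial (Polynomial L), (Polynomial.X - Polynomial.C Polynomial.X) *
      (f₀.map Polynomial.C - Polynomial.C f₀) = s ^ 2 := by
  obtain ⟨r, hr⟩ := exists_sq_add_eq_zero_of_forall_mul_map_dvd hF hf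
    (j := Polynomial.C.comp Polynomial.C)
    (τ := Polynomial.mapRingHom (Polynomial.mapRingHom σ))
    (x := Polynomial.C Polynomial.X) (y := Polynomial.X)
    (Polynomial.map_injective _ (Polynomial.map_injective _ σ.injective))
    (fun c => by simp) (by simp) (by simp)
  have hsum : f₀.map Polynomial.C - Polynomial.C f₀ = ∑ m ∈ f.support,
      Polynomial.C.comp Polynomial.C (algebraMap K L (coeff m f)) *
        (Polynomial.X ^ m 0 - Polynomial.C Polynomial.X ^ m 0) := by
    rw [hf₀, Polynomial.map_sum, map_sum, ← Finset.sum_sub_distrib]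
    refine Finset.sum_congr rfl fun m _ => ?_
    simp only [RingHom.comp_apply, Polynomial.C_mul, Polynomial.C_pow, Polynomial.map_mul,
      Polynomial.map_pow, Polynomial.map_C, Polynomial.map_X, mul_sub]
  rw [← hsum] at hr
  obtain ⟨i, hi⟩ := IsAlgClosed.exists_pow_nat_eq (-1 : L) two_pos
  have hi' : (Polynomial.C (Polynomial.C i) : Polynomial (Polynomial L)) ^ 2 = -1 := by
    rw [← Polynomial.C_pow, ← Polynomial.C_pow, hi]
    simp
  refine ⟨Polynomial.C (Polynomial.C i) * r, ?_⟩
  linear_combination hr - r ^ 2 * hi'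

theorem degree_eq_pow_of_forall_mul_map_dvd [IsAlgClosed L] {p : ℕ} [Fact p.Prime] [CharP L p]
    (hodd : Odd p) {f : MvPolynomial (Fin 2) K} {d : ℕ}
    {σ : L →+* L}
    (hF : ∀ G, Irreducible G → G ∣ map (algebraMap K L) (Fpoly f d) →
      G * map σ G ∣ map (algebraMap K L) (Fpoly f d))
    (hdeg : f.totalDegree = d) (hd : 1 ≤ d) (hf : ∀ m ∈ f.support, m 1 = 0)
    (h00 : coeffXY f 0 0 = 0) :
    (∃ l : ℕ, d = p ^ l) ∧ ∀ i j : ℕ, coeffXY f i j ≠ 0 → (i, j) = (d, 0) := by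
  obtain ⟨f₀, hf₀⟩ : ∃ f₀ : Polynomial L, f₀ = ∑ m ∈ f.support,
      Polynomial.C (algebraMap K L (coeff m f)) * Polynomial.X ^ m 0 := ⟨_, rfl⟩
  obtain ⟨s, hs⟩ := exists_sq_of_forall_mul_map_dvd hF hf hf₀
  have hcoeff : ∀ m ∈ f.support, f₀.coeff (m 0) ≠ 0 := by
    intro m hm
    rw [hf₀, Polynomial.finsetSum_coeff, Finset.sum_eq_single m]
    · simpa using hm
    · intro n hn hne
      rw [Polynomial.coeff_C_mul_X_pow, if_neg]
      exact fun h => hne (finsupp_fin_two_ext h.symm ((hf n hn).trans (hf m hm).symm))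
    · exact fun h => (h hm).elim
  obtain ⟨M, hM, hMd⟩ : ∃ M ∈ f.support, M 0 = d := by
    have hne : f.support.Nonempty := by
      rw [Finset.nonempty_iff_ne_empty, Ne, support_eq_empty]
      rintro rfl
      simp at hdeg
      omega
    obtain ⟨M, hM, h⟩ := Finset.exists_mem_eq_sup f.support hne
      (fun s => s.sum fun _ e => e)
    refine ⟨M, hM, ?_⟩
    have hsum : f.totalDegree = M.sum fun _ e => e := h
    rw [hdeg, Finsupp.sum_fintype _ _ (fun _ => rfl), Fin.sum_univ_two, hf M hM] at hsum
    omega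
  have hcd : f₀.coeff d ≠ 0 := hMd ▸ hcoeff M hM
  have hdeg0 : f₀.natDegree ≠ 0 := by
    have := Polynomial.le_natDegree_of_ne_zero hcd
    omega
  obtain ⟨l, a, b, hab⟩ := Polynomial.eq_C_mul_X_pow_add_C_of_sq p hodd hdeg0 hs
  have hsupp : ∀ n, n ≠ 0 → f₀.coeff n ≠ 0 → n = p ^ l := by
    intro n hn hne
    by_contra h
    rw [hab, Polynomial.coeff_add, Polynomial.coeff_C_mul_X_pow, if_neg h,
      Polynomial.coeff_C_of_ne_zero hn, add_zero] at hne
    exact hne rfl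
  have hdl : d = p ^ l := hsupp d (by omega) hcd
  refine ⟨⟨l, hdl⟩, fun i j hne => ?_⟩
  have hmem : (Finsupp.single (0 : Fin 2) i + Finsupp.single (1 : Fin 2) j) ∈ f.support :=
    mem_support_iff.mpr hne
  have hj : j = 0 := by simpa using hf _ hmem
  subst hj
  have hi : i ≠ 0 := by
    rintro rfl
    exact hne h00
  have hci := hcoeff _ hmem
  simp only [Finsupp.single_eq_same, Finsupp.single_zero, add_zero] at hci
  rw [hdl, ← hsupp i hi hci]

end ConjugateFactor

/-- Odd characteristic, with `a_{0,1} = 0`: if `d` is not a power of `p`, or some coefficient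
`a_{i,j}` with `(i,j) ≠ (d,0)` is nonzero, then `S_f` contains an absolutely irreducible
component defined over `F_q`. -/
theorem statement4 (p h q : ℕ) (hp : p.Prime) (hodd : p ≠ 2) (hh : 0 < h) (hq : q = p ^ h)
    (K : Type*) [Field K] [Fintype K] (hcard : Fintype.card K = q)
    (f : MvPolynomial (Fin 2) K) (d : ℕ) (hdeg : f.totalDegree = d) (hd : 1 ≤ d)
    (h00 : coeffXY f 0 0 = 0) (h01 : coeffXY f 0 1 = 0)
    (hex : (¬ ∃ j : ℕ, d = p ^ j) ∨ ∃ i j : ℕ, (i, j) ≠ (d, 0) ∧ coeffXY f i j ≠ 0) :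
    HasAbsIrrComponent (Fpoly f d) := by
  have : Fact p.Prime := ⟨hp⟩
  have : CharP K p := by
    obtain ⟨r, hr⟩ := CharP.exists K
    have hrp := CharP.char_is_prime K r
    obtain ⟨n, -, hn⟩ := FiniteField.card K r
    have hdvd : r ∣ p ^ h := by
      rw [← hq, ← hcard, hn]
      exact dvd_pow_self r n.ne_zero
    rwa [← (Nat.prime_dvd_prime_iff_eq hrp hp).mp (hrp.dvd_of_dvd_pow hdvd)]
  have : CharP (AlgebraicClosure K) p :=
    charP_of_injective_algebraMap (algebraMap K (AlgebraicClosure K)).injective p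
  by_contra hF
  obtain ⟨σ, hσ, hσ'⟩ := exists_bijective_frobenius K
  have hdvd := fun G => mul_map_frobenius_dvd hF hσ hσ' (G := G)
  have hf : ∀ m ∈ f.support, m 1 = 0 := by
    intro m hm
    have hlin : ∀ n ∈ f.support, n 1 ≤ 1 := by
      intro n hn
      have := weight_le_of_forall_mul_map_dvd hdvd hdeg hn
      by_contra hlt
      nlinarith
    by_contra hm1
    have hm1' : m 1 = 1 := le_antisymm (hlin m hm) (Nat.one_le_iff_ne_zero.mpr hm1)
    have h := coeffXY_apply f m
    rw [eq_zero_of_forall_mul_map_dvd hdvd hlin hm hm1', hm1', h01] at h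
    exact mem_support_iff.mp hm h.symm
  obtain ⟨hpow, huniq⟩ :=
    degree_eq_pow_of_forall_mul_map_dvd (hp.odd_of_ne_two hodd) hdvd hdeg hd hf h00
  rcases hex with h | ⟨i, j, hij, hne⟩
  · exact h hpow
  · exact hij (huniq i j hne)
end
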